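/- arXiv:2206.10409 — 3 statements merged into one kernel-verified Lean document; each statement's English description precedes it below -/
import Mathlib

section
/- For every μ ∈ ℝ³, every element σ ∈ Γ(μ) satisfies the Pohozaev identity for μ, i.e. (σ1 − σ3)² + (σ2 − σ3)² = 4(μ1 σ1 + μ2 σ2 + 2 μ3 σ3). -/
/-!
The diagonal matrix `D = diag(1, 1, 2)` makes `D * A` symmetric, and the Pohozaev identity says
that `F σ = ⟨σ, D A σ⟩ - 4 ⟨D μ, σ⟩` vanishes. Along a coordinate line,
`F (σ + t eᵢ) - F σ = dᵢ t (aᵢᵢ t + 2 (A σ)ᵢ - 4 μᵢ)`. As `aᵢᵢ = 1`, the last factor vanishes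
exactly at the step `t = 4 μᵢ - 2 (A σ)ᵢ` made by `Rᵢ`, so every `Rᵢ` preserves `F`; and `F 0 = 0`.
-/

/-- The (normalized) Cartan matrix of the affine Lie algebra `B₂⁽¹⁾`. -/
noncomputable def cartanB2 : Matrix (Fin 3) (Fin 3) ℝ :=
  !![1, 0, -1; 0, 1, -1; -1/2, -1/2, 1]

/-- The generator `R_i` (for the parameter `μ`) acting on `ℝ³`. -/
noncomputable def R (μ : Fin 3 → ℝ) (i : Fin 3) (σ : Fin 3 → ℝ) : Fin 3 → ℝ :=
  Function.update σ i (σ i + 4 * μ i - 2 * ∑ j, cartanB2 i j * σ j)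

/-- Membership in `Γ(μ)`, the smallest subset of `ℝ³` containing `0` and closed under
the generators `R₁, R₂, R₃`. -/
inductive GammaMem (μ : Fin 3 → ℝ) : (Fin 3 → ℝ) → Prop
  | zero : GammaMem μ 0
  | step (i : Fin 3) {σ : Fin 3 → ℝ} : GammaMem μ σ → GammaMem μ (R μ i σ)

/-- The Pohozaev identity for `μ`. -/
def Poho (μ σ : Fin 3 → ℝ) : Prop :=
  (σ 0 - σ 2) ^ 2 + (σ 1 - σ 2) ^ 2 = 4 * (μ 0 * σ 0 + μ 1 * σ 1 + 2 * μ 2 * σ 2)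

open Matrix

section Symmetrizable

variable {ι K : Type*} [Fintype ι] [DecidableEq ι]

theorem dotProduct_mulVec_self_add_single [CommSemiring K] {B : Matrix ι ι K} (hB : B.IsSymm)
    (σ : ι → K) (i : ι) (t : K) :
    (σ + Pi.single i t) ⬝ᵥ B *ᵥ (σ + Pi.single i t) =
      σ ⬝ᵥ B *ᵥ σ + 2 * t * (B *ᵥ σ) i + B i i * t ^ 2 := by
  have cross : σ ⬝ᵥ B *ᵥ Pi.single i t = t * (B *ᵥ σ) i := by
    rw [dotProduct_mulVec, ← mulVec_transpose, hB.eq, dotProduct_single, mul_comm]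
  have diag : (B *ᵥ Pi.single i t) i = B i i * t := by
    rw [mulVec, dotProduct_single]
  rw [mulVec_add, add_dotProduct, dotProduct_add, dotProduct_add, cross, single_dotProduct,
    single_dotProduct, diag]
  ring

variable [CommRing K]

/-- The generator `Rᵢ` for an arbitrary matrix `A` in place of `cartanB2`, written as a translation
along `eᵢ`. It is an involution, hence an affine reflection, when `A i i = 1`. -/
def affineReflection (A : Matrix ι ι K) (μ : ι → K) (i : ι) (σ : ι → K) : ι → K :=
  σ + Pi.single i (4 * μ i - 2 * (A *ᵥ σ) i)

/-- The Pohozaev functional of a matrix `A` with symmetrizer `d`, namely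
`⟨σ, D A σ⟩ - 4 ⟨D μ, σ⟩` with `D = diag d`; the Pohozaev identity says that it vanishes. -/
def pohozaevFunctional (A : Matrix ι ι K) (d μ σ : ι → K) : K :=
  σ ⬝ᵥ (diagonal d * A) *ᵥ σ - 4 * (d * μ) ⬝ᵥ σ

theorem pohozaevFunctional_add_single {A : Matrix ι ι K} {d : ι → K}
    (hA : (diagonal d * A).IsSymm) (μ σ : ι → K) (i : ι) (t : K) :
    pohozaevFunctional A d μ (σ + Pi.single i t) =
      pohozaevFunctional A d μ σ + d i * t * (A i i * t + 2 * (A *ᵥ σ) i - 4 * μ i) := by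
  have row : ((diagonal d * A) *ᵥ σ) i = d i * (A *ᵥ σ) i := by
    rw [← mulVec_mulVec, mulVec_diagonal]
  rw [pohozaevFunctional, pohozaevFunctional, dotProduct_mulVec_self_add_single hA, row,
    diagonal_mul, dotProduct_add, dotProduct_single, Pi.mul_apply]
  ring

theorem pohozaevFunctional_affineReflection {A : Matrix ι ι K} {d : ι → K}
    (hA : (diagonal d * A).IsSymm) {i : ι} (hAi : A i i = 1) (μ σ : ι → K) :
    pohozaevFunctional A d μ (affineReflection A μ i σ) = pohozaevFunctional A d μ σ := by
  rw [affineReflection, pohozaevFunctional_add_single hA, hAi]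
  ring

end Symmetrizable

theorem cartanB2_apply_self (i : Fin 3) : cartanB2 i i = 1 := by
  fin_cases i <;> rfl

theorem diagonal_mul_cartanB2 :
    diagonal ![1, 1, 2] * cartanB2 = !![1, 0, -1; 0, 1, -1; -1, -1, 2] := by
  ext i j
  fin_cases i <;> fin_cases j <;> norm_num [cartanB2, diagonal_mul]

theorem isSymm_diagonal_mul_cartanB2 : (diagonal ![1, 1, 2] * cartanB2).IsSymm := by
  rw [diagonal_mul_cartanB2]
  refine IsSymm.ext fun i j => ?_
  fin_cases i <;> fin_cases j <;> rfl

theorem R_eq_affineReflection (μ : Fin 3 → ℝ) (i : Fin 3) (σ : Fin 3 → ℝ) :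
    R μ i σ = affineReflection cartanB2 μ i σ := by
  ext j
  obtain rfl | hji := eq_or_ne j i
  · simp [R, affineReflection, mulVec, dotProduct, add_sub_assoc]
  · simp [R, affineReflection, hji]

theorem poho_iff_pohozaevFunctional_eq_zero (μ σ : Fin 3 → ℝ) :
    Poho μ σ ↔ pohozaevFunctional cartanB2 ![1, 1, 2] μ σ = 0 := by
  have expand : pohozaevFunctional cartanB2 ![1, 1, 2] μ σ =
      (σ 0 - σ 2) ^ 2 + (σ 1 - σ 2) ^ 2 - 4 * (μ 0 * σ 0 + μ 1 * σ 1 + 2 * μ 2 * σ 2) := by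
    rw [pohozaevFunctional, diagonal_mul_cartanB2]
    simp only [mulVec, dotProduct, Fin.sum_univ_three, of_apply, cons_val', cons_val_fin_one,
      cons_val_zero, cons_val_one, cons_val, Pi.mul_apply]
    ring
  rw [expand, sub_eq_zero, Poho]

theorem poho_R_iff (μ : Fin 3 → ℝ) (i : Fin 3) (σ : Fin 3 → ℝ) : Poho μ (R μ i σ) ↔ Poho μ σ := by
  rw [poho_iff_pohozaevFunctional_eq_zero, poho_iff_pohozaevFunctional_eq_zero,
    R_eq_affineReflection,
    pohozaevFunctional_affineReflection isSymm_diagonal_mul_cartanB2 (cartanB2_apply_self i)]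

/-- Every element of `Γ(μ)` satisfies the Pohozaev identity for `μ`. -/
theorem gamma_satisfies_pohozaev (μ σ : Fin 3 → ℝ) (h : GammaMem μ σ) : Poho μ σ := by
  induction h with
  | zero => simp [Poho]
  | step i _ ih => exact (poho_R_iff μ i _).mpr ih
end

section
/- For all real m1, m2 and each ℓ ∈ {1,…,8}, the following matrix identities hold: R_1 F^(ℓ)(m1, m2) = F^(ℓ1)(1 − m1, m2), R_2 F^(ℓ)(m1, m2) = F^(ℓ2)(m1, 1 − m2), and R_3 F^(ℓ)(m1, m2) = F^(ℓ3)(−m2 − 1, −m1 − 1), where the triple (ℓ1, ℓ2, ℓ3) equals (3,2,8), (4,1,6), (1,4,7), (2,3,5), (7,6,4), (8,5,2), (5,8,3), (6,7,1) for ℓ = 1, 2, 3, 4, 5, 6, 7, 8, respectively. Equivalently, for every μ ∈ ℝ³, R_i applied to the vector F^(ℓ)(m1, m2) μ equals the corresponding matrix applied to μ. -/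
/-- The lift of the generator `R_i` to 3×3 real matrices: the `i`-th row `F_i` is
replaced by `F_i + 4 e_i - 2 ∑_j a_{ij} F_j` and the other rows are unchanged. -/
noncomputable def RM (i : Fin 3) (F : Matrix (Fin 3) (Fin 3) ℝ) : Matrix (Fin 3) (Fin 3) ℝ :=
  Matrix.updateRow F i
    (fun k => F i k + 4 * (if k = i then 1 else 0) - 2 * ∑ j, cartanB2 i j * F j k)

/-- The matrix `F⁽¹⁾(m₁, m₂)` (type `(0,0)`). -/
noncomputable def Fmat1 (m1 m2 : ℝ) : Matrix (Fin 3) (Fin 3) ℝ :=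
  let q := (m1 ^ 2 + m2 ^ 2) / 4
  let s := (m1 ^ 2 + m2 ^ 2) / 2
  !![q, q + m1 - m2, s + 2 * m1;
     q - m1 + m2, q, s + 2 * m2;
     q - m1, q - m2, s]

/-- The matrix `F⁽²⁾(m₁, m₂)` (type `(0,1)`). -/
noncomputable def Fmat2 (m1 m2 : ℝ) : Matrix (Fin 3) (Fin 3) ℝ :=
  let q := (m1 ^ 2 + m2 ^ 2) / 4
  let s := (m1 ^ 2 + m2 ^ 2) / 2
  !![q - m2 / 2 + 1 / 4, q + m1 + m2 / 2 - 3 / 4, s + 2 * m1 - m2 + 1 / 2;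
     q - m1 + m2 / 2 - 3 / 4, q + 3 * m2 / 2 + 9 / 4, s + m2 - 3 / 2;
     q - m1 - m2 / 2 + 1 / 4, q + m2 / 2 - 3 / 4, s - m2 + 1 / 2]

/-- The matrix `F⁽³⁾(m₁, m₂)` (type `(1,0)`). -/
noncomputable def Fmat3 (m1 m2 : ℝ) : Matrix (Fin 3) (Fin 3) ℝ :=
  let q := (m1 ^ 2 + m2 ^ 2) / 4
  let s := (m1 ^ 2 + m2 ^ 2) / 2
  !![q + 3 * m1 / 2 + 9 / 4, q + m1 / 2 - m2 - 3 / 4, s + m1 - 3 / 2;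
     q + m1 / 2 + m2 - 3 / 4, q - m1 / 2 + 1 / 4, s - m1 + 2 * m2 + 1 / 2;
     q + m1 / 2 - 3 / 4, q - m1 / 2 - m2 + 1 / 4, s - m1 + 1 / 2]

/-- The matrix `F⁽⁴⁾(m₁, m₂)` (type `(1,1)`). -/
noncomputable def Fmat4 (m1 m2 : ℝ) : Matrix (Fin 3) (Fin 3) ℝ :=
  let q := (m1 ^ 2 + m2 ^ 2) / 4
  let s := (m1 ^ 2 + m2 ^ 2) / 2
  !![q + 3 * m1 / 2 - m2 / 2 + 5 / 2, q + m1 / 2 + m2 / 2 - 3 / 2, s + m1 - m2 - 1;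
     q + m1 / 2 + m2 / 2 - 3 / 2, q - m1 / 2 + 3 * m2 / 2 + 5 / 2, s - m1 + m2 - 1;
     q + m1 / 2 - m2 / 2 - 1 / 2, q - m1 / 2 + m2 / 2 - 1 / 2, s - m1 - m2 + 1]

/-- The matrix `F⁽⁵⁾(m₁, m₂)` (type `(2,2)`). -/
noncomputable def Fmat5 (m1 m2 : ℝ) : Matrix (Fin 3) (Fin 3) ℝ :=
  let q := (m1 ^ 2 + m2 ^ 2) / 4
  let s := (m1 ^ 2 + m2 ^ 2) / 2
  !![q + m1 - m2 + 2, q - 2, s + 2 * m1;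
     q - 2, q - m1 + m2 + 2, s + 2 * m2;
     q - m2, q - m1, s]

/-- The matrix `F⁽⁶⁾(m₁, m₂)` (type `(2,3)`). -/
noncomputable def Fmat6 (m1 m2 : ℝ) : Matrix (Fin 3) (Fin 3) ℝ :=
  let q := (m1 ^ 2 + m2 ^ 2) / 4
  let s := (m1 ^ 2 + m2 ^ 2) / 2
  !![q + m1 + m2 / 2 + 5 / 4, q - m2 / 2 - 7 / 4, s + 2 * m1 - m2 + 1 / 2;
     q + 3 * m2 / 2 + 1 / 4, q - m1 + m2 / 2 + 5 / 4, s + m2 - 3 / 2;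
     q + m2 / 2 - 3 / 4, q - m1 - m2 / 2 + 1 / 4, s - m2 + 1 / 2]

/-- The matrix `F⁽⁷⁾(m₁, m₂)` (type `(3,2)`). -/
noncomputable def Fmat7 (m1 m2 : ℝ) : Matrix (Fin 3) (Fin 3) ℝ :=
  let q := (m1 ^ 2 + m2 ^ 2) / 4
  let s := (m1 ^ 2 + m2 ^ 2) / 2
  !![q + m1 / 2 - m2 + 5 / 4, q + 3 * m1 / 2 + 1 / 4, s + m1 - 3 / 2;
     q - m1 / 2 - 7 / 4, q + m1 / 2 + m2 + 5 / 4, s - m1 + 2 * m2 + 1 / 2;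
     q - m1 / 2 - m2 + 1 / 4, q + m1 / 2 - 3 / 4, s - m1 + 1 / 2]

/-- The matrix `F⁽⁸⁾(m₁, m₂)` (type `(3,3)`). -/
noncomputable def Fmat8 (m1 m2 : ℝ) : Matrix (Fin 3) (Fin 3) ℝ :=
  let q := (m1 ^ 2 + m2 ^ 2) / 4
  let s := (m1 ^ 2 + m2 ^ 2) / 2
  !![q + m1 / 2 + m2 / 2 + 1 / 2, q + 3 * m1 / 2 - m2 / 2 + 1 / 2, s + m1 - m2 - 1;
     q - m1 / 2 + 3 * m2 / 2 + 1 / 2, q + m1 / 2 + m2 / 2 + 1 / 2, s - m1 + m2 - 1;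
     q - m1 / 2 + m2 / 2 - 1 / 2, q + m1 / 2 - m2 / 2 - 1 / 2, s - m1 - m2 + 1]

/-- The family `ℓ ↦ F⁽ℓ⁾(m₁, m₂)`, `ℓ = 1, …, 8` (indexed by `Fin 8`). -/
noncomputable def Fmat : Fin 8 → ℝ → ℝ → Matrix (Fin 3) (Fin 3) ℝ :=
  ![Fmat1, Fmat2, Fmat3, Fmat4, Fmat5, Fmat6, Fmat7, Fmat8]

/-- The index table `ℓ ↦ ℓ₁` (0-indexed): `(3,4,1,2,7,8,5,6)` in 1-indexed notation. -/
def perm1 : Fin 8 → Fin 8 := ![2, 3, 0, 1, 6, 7, 4, 5]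

/-- The index table `ℓ ↦ ℓ₂` (0-indexed): `(2,1,4,3,6,5,8,7)` in 1-indexed notation. -/
def perm2 : Fin 8 → Fin 8 := ![1, 0, 3, 2, 5, 4, 7, 6]

/-- The index table `ℓ ↦ ℓ₃` (0-indexed): `(8,6,7,5,4,2,3,1)` in 1-indexed notation. -/
def perm3 : Fin 8 → Fin 8 := ![7, 5, 6, 4, 3, 1, 2, 0]

/-
`R` and its lift `RM` act by affine reflections. After the recentering `σ = σ' + 2 μ` the parameter
`μ` enters only through `(1 - A) μ = (μ₃, μ₃, (μ₁ + μ₂) / 2)`, where `A` is the Cartan matrix, so it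
may be replaced by `(μ₂, μ₁, μ₃)`. On matrices this becomes an involution that commutes with every
`RM i` and maps `F⁽ℓ⁾` to `F⁽ℓ⁺⁴⁾` (indices mod 8). As each `RM i` is itself an involution and the
first two commute, only `RM 0 F⁽¹⁾`, `RM 0 F⁽²⁾`, `RM 1 F⁽¹⁾`, `RM 2 F⁽¹⁾`, `RM 2 F⁽²⁾` and
`RM 2 F⁽³⁾` have to be computed.
-/

open Matrix

theorem R_eq_add_single_mulVec (μ : Fin 3 → ℝ) (i : Fin 3) (σ : Fin 3 → ℝ) :
    R μ i σ = σ + single i i 1 *ᵥ ((4 : ℝ) • μ - 2 • cartanB2 *ᵥ σ) := by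
  ext j
  obtain rfl | hji := eq_or_ne j i
  · simp [R, single_mulVec, mulVec, dotProduct, add_sub_assoc]
  · simp [R, single_mulVec, hji]

theorem RM_eq_add_single_mul (i : Fin 3) (F : Matrix (Fin 3) (Fin 3) ℝ) :
    RM i F = F + single i i 1 * (4 - 2 • (cartanB2 * F)) := by
  ext j k
  obtain rfl | hji := eq_or_ne j i
  · simp [RM, ← mul_apply, ofNat_apply, add_sub_assoc, eq_comm, two_mul, two_nsmul, -nsmul_eq_mul]
  · simp [RM, hji]

theorem R_mulVec (μ : Fin 3 → ℝ) (i : Fin 3) (F : Matrix (Fin 3) (Fin 3) ℝ) :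
    R μ i (F *ᵥ μ) = RM i F *ᵥ μ := by
  simp only [R_eq_add_single_mulVec, RM_eq_add_single_mul, add_mulVec, sub_mulVec, smul_mulVec,
    ofNat_mulVec, ← mulVec_mulVec]

theorem RM_involutive (i : Fin 3) : Function.Involutive (RM i) := by
  intro F
  have hdiag : single i i 1 * cartanB2 * single i i 1 = single i i 1 := by
    fin_cases i <;> simp [cartanB2]
  simp only [RM_eq_add_single_mul]
  generalize (single i i 1 : Matrix (Fin 3) (Fin 3) ℝ) = E at hdiag ⊢
  calc
    _ = F + 2 • (E * (4 - 2 • (cartanB2 * F)))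
          - 2 • (E * cartanB2 * E * (4 - 2 • (cartanB2 * F))) := by noncomm_ring
    _ = F := by rw [hdiag, add_sub_cancel_right]

theorem RM_RM_of_cartanB2_eq_zero {i j : Fin 3} (hij : cartanB2 i j = 0)
    (F : Matrix (Fin 3) (Fin 3) ℝ) :
    RM i (RM j F) = F + (single i i 1 + single j j 1) * (4 - 2 • (cartanB2 * F)) := by
  have hzero : single i i 1 * cartanB2 * single j j 1 = 0 := by simp [hij]
  simp only [RM_eq_add_single_mul]
  generalize (single i i 1 : Matrix (Fin 3) (Fin 3) ℝ) = E at hzero ⊢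
  generalize (single j j 1 : Matrix (Fin 3) (Fin 3) ℝ) = E' at hzero ⊢
  calc
    _ = F + (E + E') * (4 - 2 • (cartanB2 * F))
          - 2 • (E * cartanB2 * E' * (4 - 2 • (cartanB2 * F))) := by noncomm_ring
    _ = F + (E + E') * (4 - 2 • (cartanB2 * F)) := by rw [hzero, zero_mul, smul_zero, sub_zero]

theorem RM_commute {i j : Fin 3} (hij : cartanB2 i j = 0) (hji : cartanB2 j i = 0) :
    Function.Commute (RM i) (RM j) := fun F => by
  rw [RM_RM_of_cartanB2_eq_zero hij, RM_RM_of_cartanB2_eq_zero hji, add_comm (single i i 1)]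

/-- The exchange of `μ₁` and `μ₂` in the recentered variable `σ - 2 μ`, lifted to the matrices `F`
with `σ = F μ`: the first two columns of `F - 2` are swapped. -/
noncomputable def recenteredSwap (F : Matrix (Fin 3) (Fin 3) ℝ) : Matrix (Fin 3) (Fin 3) ℝ :=
  (F - 2) * swap ℝ 0 1 + 2

theorem recenteredSwap_involutive : Function.Involutive recenteredSwap := fun F => by
  rw [recenteredSwap, recenteredSwap, add_sub_cancel_right, mul_assoc, swap_mul_self, mul_one,
    sub_add_cancel]

theorem swap_zero_one_eq : swap ℝ (0 : Fin 3) 1 = !![0, 1, 0; 1, 0, 0; 0, 0, 1] := by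
  ext i j
  fin_cases i <;> fin_cases j <;>
    simp [swap, Equiv.Perm.permMatrix, Equiv.swap_apply_def]

theorem one_sub_cartanB2_mul_swap : (1 - cartanB2) * swap ℝ 0 1 = 1 - cartanB2 := by
  rw [swap_zero_one_eq, cartanB2, one_fin_three]
  simp

theorem RM_commute_recenteredSwap (i : Fin 3) : Function.Commute (RM i) recenteredSwap := by
  intro F
  have hswap := one_sub_cartanB2_mul_swap
  simp only [RM_eq_add_single_mul, recenteredSwap]
  generalize swap ℝ (0 : Fin 3) 1 = P at hswap ⊢
  generalize (single i i 1 : Matrix (Fin 3) (Fin 3) ℝ) = E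
  calc
    _ = (F - 2) * P + 2 + E * (4 • (1 - cartanB2) - 2 • (cartanB2 * (F - 2) * P)) := by
      noncomm_ring
    _ = (F - 2) * P + 2 + E * (4 • ((1 - cartanB2) * P) - 2 • (cartanB2 * (F - 2) * P)) := by
      rw [hswap]
    _ = _ := by noncomm_ring

theorem recenteredSwap_eq (F : Matrix (Fin 3) (Fin 3) ℝ) :
    recenteredSwap F =
      !![F 0 1 + 2, F 0 0 - 2, F 0 2;
         F 1 1 - 2, F 1 0 + 2, F 1 2;
         F 2 1, F 2 0, F 2 2] := by
  ext i j
  fin_cases i <;> fin_cases j <;>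
    simp [recenteredSwap, swap_zero_one_eq, mul_apply, Fin.sum_univ_three, ofNat_apply]

theorem Fmat_add_four (ℓ : Fin 8) (m1 m2 : ℝ) :
    Fmat (ℓ + 4) m1 m2 = recenteredSwap (Fmat ℓ m1 m2) := by
  have h1 : recenteredSwap (Fmat1 m1 m2) = Fmat5 m1 m2 := by
    simp only [recenteredSwap_eq, Fmat1, Fmat5, of_apply, cons_val]
  have h2 : recenteredSwap (Fmat2 m1 m2) = Fmat6 m1 m2 := by
    simp only [recenteredSwap_eq, Fmat2, Fmat6, of_apply, cons_val]
    ring_nf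
  have h3 : recenteredSwap (Fmat3 m1 m2) = Fmat7 m1 m2 := by
    simp only [recenteredSwap_eq, Fmat3, Fmat7, of_apply, cons_val]
    ring_nf
  have h4 : recenteredSwap (Fmat4 m1 m2) = Fmat8 m1 m2 := by
    simp only [recenteredSwap_eq, Fmat4, Fmat8, of_apply, cons_val]
    ring_nf
  have hinv {F G : Matrix (Fin 3) (Fin 3) ℝ} (h : recenteredSwap F = G) : F = recenteredSwap G :=
    recenteredSwap_involutive.eq_iff.1 h
  fin_cases ℓ
  exacts [h1.symm, h2.symm, h3.symm, h4.symm, hinv h1, hinv h2, hinv h3, hinv h4]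

theorem RM_zero_eq (F : Matrix (Fin 3) (Fin 3) ℝ) :
    RM 0 F =
      !![2 * F 2 0 - F 0 0 + 4, 2 * F 2 1 - F 0 1, 2 * F 2 2 - F 0 2;
         F 1 0, F 1 1, F 1 2;
         F 2 0, F 2 1, F 2 2] := by
  rw [eta_fin_three (RM 0 F)]
  simp only [RM, updateRow_apply, cartanB2, Fin.sum_univ_three, of_apply, cons_val, Fin.reduceEq,
    if_true, if_false]
  ring_nf

theorem RM_one_eq (F : Matrix (Fin 3) (Fin 3) ℝ) :
    RM 1 F =
      !![F 0 0, F 0 1, F 0 2;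
         2 * F 2 0 - F 1 0, 2 * F 2 1 - F 1 1 + 4, 2 * F 2 2 - F 1 2;
         F 2 0, F 2 1, F 2 2] := by
  rw [eta_fin_three (RM 1 F)]
  simp only [RM, updateRow_apply, cartanB2, Fin.sum_univ_three, of_apply, cons_val, Fin.reduceEq,
    if_true, if_false]
  ring_nf

theorem RM_two_eq (F : Matrix (Fin 3) (Fin 3) ℝ) :
    RM 2 F =
      !![F 0 0, F 0 1, F 0 2;
         F 1 0, F 1 1, F 1 2;
         F 0 0 + F 1 0 - F 2 0, F 0 1 + F 1 1 - F 2 1, F 0 2 + F 1 2 - F 2 2 + 4] := by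
  rw [eta_fin_three (RM 2 F)]
  simp only [RM, updateRow_apply, cartanB2, Fin.sum_univ_three, of_apply, cons_val, Fin.reduceEq,
    if_true, if_false]
  ring_nf

theorem RM_zero_Fmat1 (m1 m2 : ℝ) : RM 0 (Fmat1 m1 m2) = Fmat3 (1 - m1) m2 := by
  simp only [RM_zero_eq, Fmat1, Fmat3, of_apply, cons_val]
  ring_nf

theorem RM_zero_Fmat2 (m1 m2 : ℝ) : RM 0 (Fmat2 m1 m2) = Fmat4 (1 - m1) m2 := by
  simp only [RM_zero_eq, Fmat2, Fmat4, of_apply, cons_val]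
  ring_nf

theorem RM_one_Fmat1 (m1 m2 : ℝ) : RM 1 (Fmat1 m1 m2) = Fmat2 m1 (1 - m2) := by
  simp only [RM_one_eq, Fmat1, Fmat2, of_apply, cons_val]
  ring_nf

theorem RM_one_Fmat3 (m1 m2 : ℝ) : RM 1 (Fmat3 m1 m2) = Fmat4 m1 (1 - m2) := by
  have hcomm : Function.Commute (RM 1) (RM 0) :=
    RM_commute (by simp [cartanB2]) (by simp [cartanB2])
  calc
    RM 1 (Fmat3 m1 m2) = RM 1 (RM 0 (Fmat1 (1 - m1) m2)) := by rw [RM_zero_Fmat1, sub_sub_cancel]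
    _ = RM 0 (RM 1 (Fmat1 (1 - m1) m2)) := hcomm _
    _ = Fmat4 m1 (1 - m2) := by rw [RM_one_Fmat1, RM_zero_Fmat2, sub_sub_cancel]

theorem RM_two_Fmat1 (m1 m2 : ℝ) : RM 2 (Fmat1 m1 m2) = Fmat8 (-m2 - 1) (-m1 - 1) := by
  simp only [RM_two_eq, Fmat1, Fmat8, of_apply, cons_val]
  ring_nf

theorem RM_two_Fmat2 (m1 m2 : ℝ) : RM 2 (Fmat2 m1 m2) = Fmat6 (-m2 - 1) (-m1 - 1) := by
  simp only [RM_two_eq, Fmat2, Fmat6, of_apply, cons_val]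
  ring_nf

theorem RM_two_Fmat3 (m1 m2 : ℝ) : RM 2 (Fmat3 m1 m2) = Fmat7 (-m2 - 1) (-m1 - 1) := by
  simp only [RM_two_eq, Fmat3, Fmat7, of_apply, cons_val]
  ring_nf

/-- The action of the generators on the parameters `(m₁, m₂)`. -/
def paramReflection : Fin 3 → ℝ × ℝ → ℝ × ℝ :=
  ![fun m => (1 - m.1, m.2), fun m => (m.1, 1 - m.2), fun m => (-m.2 - 1, -m.1 - 1)]

/-- The action of the generators on the (0-based) index `ℓ` of `F⁽ℓ⁾`. -/
def indexPerm : Fin 3 → Fin 8 → Fin 8 := ![perm1, perm2, perm3]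

theorem paramReflection_involutive (i : Fin 3) : Function.Involutive (paramReflection i) := by
  intro m
  fin_cases i <;> simp [paramReflection]

theorem indexPerm_involutive (i : Fin 3) : Function.Involutive (indexPerm i) := by
  unfold Function.Involutive
  revert i
  decide

theorem indexPerm_add_four (i : Fin 3) (ℓ : Fin 8) :
    indexPerm i (ℓ + 4) = indexPerm i ℓ + 4 := by
  revert i ℓ
  decide

/-- The `ℓ`-th family is mapped by `RM i` to the family with index `indexPerm i ℓ`, with parameters
changed by `paramReflection i`. -/
def RMActsOnFmat (i : Fin 3) (ℓ : Fin 8) : Prop :=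
  ∀ m : ℝ × ℝ, RM i (Fmat ℓ m.1 m.2) =
    Fmat (indexPerm i ℓ) (paramReflection i m).1 (paramReflection i m).2

theorem RMActsOnFmat.apply_indexPerm {i : Fin 3} {ℓ : Fin 8} (h : RMActsOnFmat i ℓ) :
    RMActsOnFmat i (indexPerm i ℓ) := by
  intro m
  rw [(RM_involutive i).eq_iff, indexPerm_involutive, h (paramReflection i m),
    paramReflection_involutive]

theorem RMActsOnFmat.add_four {i : Fin 3} {ℓ : Fin 8} (h : RMActsOnFmat i ℓ) :
    RMActsOnFmat i (ℓ + 4) := by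
  intro m
  rw [Fmat_add_four, RM_commute_recenteredSwap, h, indexPerm_add_four, Fmat_add_four]

theorem RM_acts_on_Fmat (i : Fin 3) (ℓ : Fin 8) : RMActsOnFmat i ℓ := by
  have h00 : RMActsOnFmat 0 0 := fun m => RM_zero_Fmat1 m.1 m.2
  have h01 : RMActsOnFmat 0 1 := fun m => RM_zero_Fmat2 m.1 m.2
  have h10 : RMActsOnFmat 1 0 := fun m => RM_one_Fmat1 m.1 m.2
  have h12 : RMActsOnFmat 1 2 := fun m => RM_one_Fmat3 m.1 m.2
  have h20 : RMActsOnFmat 2 0 := fun m => RM_two_Fmat1 m.1 m.2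
  have h21 : RMActsOnFmat 2 1 := fun m => RM_two_Fmat2 m.1 m.2
  have h22 : RMActsOnFmat 2 2 := fun m => RM_two_Fmat3 m.1 m.2
  fin_cases i
  · fin_cases ℓ
    exacts [h00, h01, h00.apply_indexPerm, h01.apply_indexPerm,
      h00.add_four, h01.add_four, h00.apply_indexPerm.add_four, h01.apply_indexPerm.add_four]
  · fin_cases ℓ
    exacts [h10, h10.apply_indexPerm, h12, h12.apply_indexPerm,
      h10.add_four, h10.apply_indexPerm.add_four, h12.add_four, h12.apply_indexPerm.add_four]
  · fin_cases ℓ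
    exacts [h20, h21, h22, h20.apply_indexPerm.add_four,
      h20.add_four, h21.apply_indexPerm, h22.apply_indexPerm, h20.apply_indexPerm]

/-- The matrix identities `R₁ F⁽ℓ⁾(m₁,m₂) = F⁽ℓ¹⁾(1-m₁,m₂)`,
`R₂ F⁽ℓ⁾(m₁,m₂) = F⁽ℓ²⁾(m₁,1-m₂)`, `R₃ F⁽ℓ⁾(m₁,m₂) = F⁽ℓ³⁾(-m₂-1,-m₁-1)`, with
`(ℓ₁,ℓ₂,ℓ₃)` as in the table; equivalently, the corresponding identities for the
vectors `F⁽ℓ⁾(m₁,m₂) μ`, for every `μ ∈ ℝ³`. -/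
theorem generators_act_on_Fmat (m1 m2 : ℝ) (ℓ : Fin 8) :
    RM 0 (Fmat ℓ m1 m2) = Fmat (perm1 ℓ) (1 - m1) m2 ∧
    RM 1 (Fmat ℓ m1 m2) = Fmat (perm2 ℓ) m1 (1 - m2) ∧
    RM 2 (Fmat ℓ m1 m2) = Fmat (perm3 ℓ) (-m2 - 1) (-m1 - 1) ∧
    (∀ μ : Fin 3 → ℝ,
      R μ 0 ((Fmat ℓ m1 m2).mulVec μ) = (Fmat (perm1 ℓ) (1 - m1) m2).mulVec μ ∧
      R μ 1 ((Fmat ℓ m1 m2).mulVec μ) = (Fmat (perm2 ℓ) m1 (1 - m2)).mulVec μ ∧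
      R μ 2 ((Fmat ℓ m1 m2).mulVec μ) = (Fmat (perm3 ℓ) (-m2 - 1) (-m1 - 1)).mulVec μ) := by
  have hzero := RM_acts_on_Fmat 0 ℓ (m1, m2)
  have hone := RM_acts_on_Fmat 1 ℓ (m1, m2)
  have htwo := RM_acts_on_Fmat 2 ℓ (m1, m2)
  refine ⟨hzero, hone, htwo, fun μ => ?_⟩
  simp only [R_mulVec]
  exact ⟨congrArg (·.mulVec μ) hzero, congrArg (·.mulVec μ) hone, congrArg (·.mulVec μ) htwo⟩
end

section
/- Γ((1,1,1)) = { (m1(m1+3) + m2(m2−1), m1(m1−1) + m2(m2+3), m1(m1−1) + m2(m2−1)) : (m1, m2) ∈ ℤ² such that either (m1 mod 4 ∈ {0,1} and m2 mod 4 ∈ {0,1}) or (m1 mod 4 ∈ {2,3} and m2 mod 4 ∈ {2,3}) }. -/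
/-! In the coordinates `(x, y) = (σ₁ - σ₃, σ₂ - σ₃)` the generators become the reflections of the
plane in the lines `x = 2μ₁`, `y = 2μ₂` and `x + y = -4μ₃`, and the orbit of the origin under the
group they generate is explicit. All of `Γ(μ)` lies on the Pohozaev quadric, because each `R_i`
preserves it; when `μ₁ + μ₂ + 2μ₃ ≠ 0`, the quadric is the graph of a function of `(x, y)`, so the
orbit in the plane determines `Γ(μ)`. -/

section Dihedral

variable {G : Type*} [AddCommGroup G] {a t x : G}

/-- The orbit of `0` under the dihedral group generated by the reflections `x ↦ a - x` and
`x ↦ a - t - x`, whose products are the translations by multiples of `t`. -/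
def dihedralOrbit (a t : G) : Set G :=
  {x | ∃ k : ℤ, x = k • t ∨ x = a + k • t}

lemma zero_mem_dihedralOrbit : 0 ∈ dihedralOrbit a t :=
  ⟨0, Or.inl (zero_zsmul t).symm⟩

lemma add_zsmul_sub_mem_dihedralOrbit (hx : x ∈ dihedralOrbit a t) (n : ℤ) :
    a + n • t - x ∈ dihedralOrbit a t := by
  obtain ⟨k, rfl | rfl⟩ := hx
  · exact ⟨n - k, Or.inr (by rw [sub_zsmul]; abel)⟩
  · exact ⟨n - k, Or.inl (by rw [sub_zsmul]; abel)⟩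

lemma dihedralOrbit_subset {s : Set G} (zero_mem : 0 ∈ s) (reflect_mem : ∀ x ∈ s, a - x ∈ s)
    (reflect_mem' : ∀ x ∈ s, a - t - x ∈ s) : dihedralOrbit a t ⊆ s := by
  have add_mem (x : G) (hx : x ∈ s) : x + t ∈ s := by
    convert reflect_mem _ (reflect_mem' x hx) using 1
    abel
  have sub_mem (x : G) (hx : x ∈ s) : x - t ∈ s := by
    convert reflect_mem' _ (reflect_mem x hx) using 1
    abel
  have zsmul_mem (k : ℤ) : k • t ∈ s := by
    induction k with
    | zero => simpa using zero_mem
    | succ k ih => simpa only [add_zsmul, one_zsmul] using add_mem _ ih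
    | pred k ih => simpa [sub_zsmul, ← sub_eq_add_neg] using sub_mem _ ih
  rintro _ ⟨k, rfl | rfl⟩
  · exact zsmul_mem k
  · simpa using reflect_mem _ (zsmul_mem (-k))

end Dihedral

section Plane

variable {μ σ : Fin 3 → ℝ} {p : ℝ × ℝ}

/-- The pairing of `μ` with the left null vector `(1, 1, 2)` of `cartanB2`. -/
def level (μ : Fin 3 → ℝ) : ℝ :=
  μ 0 + μ 1 + 2 * μ 2

/-- The Pohozaev identity for the parameter `μ`. -/
def Pohozaev (μ σ : Fin 3 → ℝ) : Prop :=
  (σ 0 - σ 2) ^ 2 + (σ 1 - σ 2) ^ 2 = 4 * (μ 0 * σ 0 + μ 1 * σ 1 + 2 * μ 2 * σ 2)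

/-- Coordinates on the quotient of `ℝ³` by the kernel `ℝ(1, 1, 1)` of `cartanB2`. -/
def planeCoords (σ : Fin 3 → ℝ) : ℝ × ℝ :=
  (σ 0 - σ 2, σ 1 - σ 2)

/-- The action of the generators `R μ i` on the plane coordinates. -/
def planeReflection (μ : Fin 3 → ℝ) : Fin 3 → ℝ × ℝ → ℝ × ℝ
  | 0, (x, y) => (4 * μ 0 - x, y)
  | 1, (x, y) => (x, 4 * μ 1 - y)
  | 2, (x, y) => (-4 * μ 2 - y, -4 * μ 2 - x)

lemma R_zero_eq (μ σ : Fin 3 → ℝ) :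
    R μ 0 σ = Function.update σ 0 (4 * μ 0 + 2 * σ 2 - σ 0) := by
  have row_dot : ∑ j, cartanB2 0 j * σ j = σ 0 - σ 2 := by
    simp [cartanB2, Fin.sum_univ_three, sub_eq_add_neg]
  rw [R, row_dot]
  ring_nf

lemma R_one_eq (μ σ : Fin 3 → ℝ) :
    R μ 1 σ = Function.update σ 1 (4 * μ 1 + 2 * σ 2 - σ 1) := by
  have row_dot : ∑ j, cartanB2 1 j * σ j = σ 1 - σ 2 := by
    simp [cartanB2, Fin.sum_univ_three, sub_eq_add_neg]
  rw [R, row_dot]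
  ring_nf

lemma R_two_eq (μ σ : Fin 3 → ℝ) :
    R μ 2 σ = Function.update σ 2 (4 * μ 2 + σ 0 + σ 1 - σ 2) := by
  have row_dot : ∑ j, cartanB2 2 j * σ j = -1 / 2 * σ 0 + -1 / 2 * σ 1 + σ 2 := by
    simp [cartanB2, Fin.sum_univ_three]
  rw [R, row_dot]
  ring_nf

lemma planeCoords_R (μ : Fin 3 → ℝ) (i : Fin 3) (σ : Fin 3 → ℝ) :
    planeCoords (R μ i σ) = planeReflection μ i (planeCoords σ) := by
  fin_cases i
  all_goals
    simp only [Fin.zero_eta, Fin.mk_one, Fin.reduceFinMk, R_zero_eq, R_one_eq, R_two_eq,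
      planeCoords, planeReflection, Function.update_apply, Fin.reduceEq, if_true, if_false]
    ext <;> ring

lemma Pohozaev.map_R (h : Pohozaev μ σ) (i : Fin 3) : Pohozaev μ (R μ i σ) := by
  unfold Pohozaev at *
  fin_cases i
  all_goals
    simp only [Fin.zero_eta, Fin.mk_one, Fin.reduceFinMk, R_zero_eq, R_one_eq, R_two_eq,
      Function.update_apply, Fin.reduceEq, if_true, if_false]
    linear_combination h

lemma GammaMem.pohozaev (h : GammaMem μ σ) : Pohozaev μ σ := by
  induction h with
  | zero => simp [Pohozaev]
  | step i _ ih => exact ih.map_R i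

lemma Pohozaev.eq_of_planeCoords_eq {τ : Fin 3 → ℝ} (hμ : level μ ≠ 0) (hσ : Pohozaev μ σ)
    (hτ : Pohozaev μ τ) (h : planeCoords σ = planeCoords τ) : σ = τ := by
  obtain ⟨hx, hy⟩ : σ 0 - σ 2 = τ 0 - τ 2 ∧ σ 1 - σ 2 = τ 1 - τ 2 := Prod.ext_iff.mp h
  have level_mul_eq : level μ * σ 2 = level μ * τ 2 := by
    unfold Pohozaev at hσ hτ
    rw [hx, hy] at hσ
    unfold level
    linear_combination (hτ - hσ) / 4 - μ 0 * hx - μ 1 * hy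
  have h2 : σ 2 = τ 2 := mul_left_cancel₀ hμ level_mul_eq
  ext j
  fin_cases j
  · simpa [h2] using hx
  · simpa [h2] using hy
  · exact h2

/-- The orbit of the origin under those reflections in vertical and horizontal lines that belong to
the group generated by the `planeReflection μ i`. -/
def dihedralProduct (μ : Fin 3 → ℝ) : Set (ℝ × ℝ) :=
  dihedralOrbit (4 * μ 0) (4 * level μ) ×ˢ dihedralOrbit (4 * μ 1) (4 * level μ)

/-- The orbit of the origin under the group generated by the `planeReflection μ i`. As
`planeReflection μ 2` is an involution, the preimage in the second piece is also the image. -/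
def planeOrbit (μ : Fin 3 → ℝ) : Set (ℝ × ℝ) :=
  dihedralProduct μ ∪ planeReflection μ 2 ⁻¹' dihedralProduct μ

lemma planeReflection_two_involutive (μ : Fin 3 → ℝ) :
    Function.Involutive (planeReflection μ 2) := by
  rintro ⟨x, y⟩
  simp [planeReflection]

lemma planeReflection_conj_zero (μ : Fin 3 → ℝ) (x y : ℝ) :
    planeReflection μ 2 (planeReflection μ 0 (planeReflection μ 2 (x, y))) =
      (x, 4 * μ 1 - 4 * level μ - y) := by
  simp only [planeReflection, level]
  ext <;> ring

lemma planeReflection_conj_one (μ : Fin 3 → ℝ) (x y : ℝ) :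
    planeReflection μ 2 (planeReflection μ 1 (planeReflection μ 2 (x, y))) =
      (4 * μ 0 - 4 * level μ - x, y) := by
  simp only [planeReflection, level]
  ext <;> ring

lemma planeReflection_mem_planeOrbit (hp : p ∈ planeOrbit μ) (i : Fin 3) :
    planeReflection μ i p ∈ planeOrbit μ := by
  rcases hp with ⟨hx, hy⟩ | hp
  · fin_cases i
    · exact Or.inl ⟨by simpa [planeReflection] using add_zsmul_sub_mem_dihedralOrbit hx 0, hy⟩
    · exact Or.inl ⟨hx, by simpa [planeReflection] using add_zsmul_sub_mem_dihedralOrbit hy 0⟩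
    · refine Or.inr ?_
      rw [Set.mem_preimage]
      exact (planeReflection_two_involutive μ p).symm ▸ ⟨hx, hy⟩
  · obtain ⟨⟨x, y⟩, rfl⟩ := (planeReflection_two_involutive μ).surjective p
    obtain ⟨hx, hy⟩ : (x, y) ∈ dihedralProduct μ := by
      rwa [Set.mem_preimage, planeReflection_two_involutive μ] at hp
    fin_cases i
    · refine Or.inr ?_
      rw [Set.mem_preimage]
      exact planeReflection_conj_zero μ x y ▸
        ⟨hx, by simpa [← sub_eq_add_neg] using add_zsmul_sub_mem_dihedralOrbit hy (-1)⟩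
    · refine Or.inr ?_
      rw [Set.mem_preimage]
      exact planeReflection_conj_one μ x y ▸
        ⟨by simpa [← sub_eq_add_neg] using add_zsmul_sub_mem_dihedralOrbit hx (-1), hy⟩
    · exact Or.inl hp

lemma planeOrbit_subset {s : Set (ℝ × ℝ)} (zero_mem : 0 ∈ s)
    (map_mem : ∀ i, ∀ p ∈ s, planeReflection μ i p ∈ s) : planeOrbit μ ⊆ s := by
  have axis_mem (x : ℝ) (hx : x ∈ dihedralOrbit (4 * μ 0) (4 * level μ)) : (x, 0) ∈ s := by
    refine dihedralOrbit_subset (s := {x | (x, 0) ∈ s}) zero_mem (fun x hx => map_mem 0 _ hx)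
      (fun x hx => ?_) hx
    have := map_mem 2 _ (map_mem 1 _ (map_mem 2 _ hx))
    rwa [planeReflection_conj_one] at this
  have product_subset : dihedralProduct μ ⊆ s := by
    rintro ⟨x, y⟩ ⟨hx, hy⟩
    refine dihedralOrbit_subset (s := {y | (x, y) ∈ s}) (axis_mem x hx)
      (fun y hy => map_mem 1 _ hy) (fun y hy => ?_) hy
    have := map_mem 2 _ (map_mem 0 _ (map_mem 2 _ hy))
    rwa [planeReflection_conj_zero] at this
  rintro p (hp | hp)
  · exact product_subset hp
  · rw [← planeReflection_two_involutive μ p]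
    exact map_mem 2 _ (product_subset hp)

theorem image_planeCoords_gammaMem (μ : Fin 3 → ℝ) :
    planeCoords '' {σ | GammaMem μ σ} = planeOrbit μ := by
  apply Set.Subset.antisymm
  · rintro _ ⟨σ, hσ, rfl⟩
    induction hσ with
    | zero =>
      exact Or.inl (by simpa [planeCoords] using ⟨zero_mem_dihedralOrbit, zero_mem_dihedralOrbit⟩)
    | step i _ ih =>
      rw [planeCoords_R]
      exact planeReflection_mem_planeOrbit ih i
  · refine planeOrbit_subset ⟨0, GammaMem.zero, by simp [planeCoords]⟩ ?_
    rintro i _ ⟨σ, hσ, rfl⟩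
    exact ⟨R μ i σ, GammaMem.step i hσ, planeCoords_R μ i σ⟩

theorem gamma111_explicit_general (hμ : level μ ≠ 0) :
    {σ | GammaMem μ σ} = {σ | Pohozaev μ σ ∧ planeCoords σ ∈ planeOrbit μ} := by
  ext σ
  rw [Set.mem_ofPred_eq, Set.mem_ofPred_eq, ← image_planeCoords_gammaMem]
  refine ⟨fun hσ => ⟨hσ.pohozaev, σ, hσ, rfl⟩, ?_⟩
  rintro ⟨pohozaev, τ, hτ, h⟩
  exact pohozaev.eq_of_planeCoords_eq hμ hτ.pohozaev h.symm ▸ hτ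

end Plane

lemma mem_dihedralOrbit_four_sixteen {x : ℝ} :
    x ∈ dihedralOrbit 4 16 ↔ ∃ m : ℤ, (m % 4 = 0 ∨ m % 4 = 1) ∧ x = 4 * m := by
  constructor
  · rintro ⟨k, rfl | rfl⟩
    · exact ⟨4 * k, by omega, by rw [zsmul_eq_mul]; push_cast; ring⟩
    · exact ⟨4 * k + 1, by omega, by rw [zsmul_eq_mul]; push_cast; ring⟩
  · rintro ⟨m, hm | hm, rfl⟩
    · obtain ⟨k, rfl⟩ : ∃ k, m = 4 * k := ⟨m / 4, by omega⟩
      exact ⟨k, Or.inl (by rw [zsmul_eq_mul]; push_cast; ring)⟩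
    · obtain ⟨k, rfl⟩ : ∃ k, m = 4 * k + 1 := ⟨m / 4, by omega⟩
      exact ⟨k, Or.inr (by rw [zsmul_eq_mul]; push_cast; ring)⟩

lemma neg_four_sub_mem_dihedralOrbit_four_sixteen {x : ℝ} :
    -4 - x ∈ dihedralOrbit 4 16 ↔ ∃ m : ℤ, (m % 4 = 2 ∨ m % 4 = 3) ∧ x = 4 * m := by
  rw [mem_dihedralOrbit_four_sixteen]
  constructor
  · rintro ⟨m, hm, hx⟩
    exact ⟨-1 - m, by omega, by push_cast; linarith⟩
  · rintro ⟨m, hm, rfl⟩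
    exact ⟨-1 - m, by omega, by push_cast; ring⟩

lemma level_one : level ![1, 1, 1] = 4 := by
  simp only [level, Matrix.cons_val]
  norm_num

lemma mk_mem_planeOrbit_one {x y : ℝ} :
    (x, y) ∈ planeOrbit ![1, 1, 1] ↔
      (x ∈ dihedralOrbit 4 16 ∧ y ∈ dihedralOrbit 4 16) ∨
        (-4 - x ∈ dihedralOrbit 4 16 ∧ -4 - y ∈ dihedralOrbit 4 16) := by
  simp only [planeOrbit, dihedralProduct, planeReflection, level_one, Matrix.cons_val,
    Set.mem_union, Set.mem_preimage, Set.mem_prod]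
  norm_num [and_comm]

lemma mem_planeOrbit_one_iff {p : ℝ × ℝ} :
    p ∈ planeOrbit ![1, 1, 1] ↔ ∃ m1 m2 : ℤ,
      (((m1 % 4 = 0 ∨ m1 % 4 = 1) ∧ (m2 % 4 = 0 ∨ m2 % 4 = 1)) ∨
       ((m1 % 4 = 2 ∨ m1 % 4 = 3) ∧ (m2 % 4 = 2 ∨ m2 % 4 = 3))) ∧
      p = (4 * (m1 : ℝ), 4 * (m2 : ℝ)) := by
  obtain ⟨x, y⟩ := p
  rw [mk_mem_planeOrbit_one, neg_four_sub_mem_dihedralOrbit_four_sixteen,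
    neg_four_sub_mem_dihedralOrbit_four_sixteen, mem_dihedralOrbit_four_sixteen,
    mem_dihedralOrbit_four_sixteen]
  constructor
  · rintro (⟨⟨m1, h1, rfl⟩, m2, h2, rfl⟩ | ⟨⟨m1, h1, rfl⟩, m2, h2, rfl⟩)
    · exact ⟨m1, m2, Or.inl ⟨h1, h2⟩, rfl⟩
    · exact ⟨m1, m2, Or.inr ⟨h1, h2⟩, rfl⟩
  · rintro ⟨m1, m2, ⟨h1, h2⟩ | ⟨h1, h2⟩, ⟨⟩⟩
    · exact Or.inl ⟨⟨m1, h1, rfl⟩, m2, h2, rfl⟩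
    · exact Or.inr ⟨⟨m1, h1, rfl⟩, m2, h2, rfl⟩

lemma pohozaev_one_and_planeCoords_eq_iff {σ : Fin 3 → ℝ} {m1 m2 : ℤ} :
    Pohozaev ![1, 1, 1] σ ∧ planeCoords σ = (4 * (m1 : ℝ), 4 * (m2 : ℝ)) ↔
      σ = ![((m1 * (m1 + 3) + m2 * (m2 - 1) : ℤ) : ℝ),
            ((m1 * (m1 - 1) + m2 * (m2 + 3) : ℤ) : ℝ),
            ((m1 * (m1 - 1) + m2 * (m2 - 1) : ℤ) : ℝ)] := by
  constructor
  · rintro ⟨pohozaev, coords⟩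
    obtain ⟨hx, hy⟩ : σ 0 - σ 2 = 4 * m1 ∧ σ 1 - σ 2 = 4 * m2 := Prod.ext_iff.mp coords
    have h2 : σ 2 = m1 * (m1 - 1) + m2 * (m2 - 1) := by
      simp only [Pohozaev, hx, hy, Matrix.cons_val] at pohozaev
      linear_combination -pohozaev / 16 - (hx + hy) / 4
    have h0 : σ 0 = m1 * (m1 + 3) + m2 * (m2 - 1) := by linear_combination hx + h2
    have h1 : σ 1 = m1 * (m1 - 1) + m2 * (m2 + 3) := by linear_combination hy + h2
    ext j
    fin_cases j <;> simp [h0, h1, h2]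
  · rintro rfl
    constructor
    · simp only [Pohozaev, Matrix.cons_val]
      push_cast
      ring
    · simp only [planeCoords, Matrix.cons_val]
      push_cast
      ext <;> ring

/-- Explicit description of `Γ((1,1,1))`:
`Γ((1,1,1)) = {(m₁(m₁+3)+m₂(m₂−1), m₁(m₁−1)+m₂(m₂+3), m₁(m₁−1)+m₂(m₂−1))}` where
`(m₁, m₂) ∈ ℤ²` with either `m₁, m₂ ≡ 0, 1 (mod 4)` or `m₁, m₂ ≡ 2, 3 (mod 4)`. -/
theorem gamma111_explicit :
    {σ : Fin 3 → ℝ | GammaMem ![1, 1, 1] σ} =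
    {σ : Fin 3 → ℝ | ∃ m1 m2 : ℤ,
      (((m1 % 4 = 0 ∨ m1 % 4 = 1) ∧ (m2 % 4 = 0 ∨ m2 % 4 = 1)) ∨
       ((m1 % 4 = 2 ∨ m1 % 4 = 3) ∧ (m2 % 4 = 2 ∨ m2 % 4 = 3))) ∧
      σ = ![((m1 * (m1 + 3) + m2 * (m2 - 1) : ℤ) : ℝ),
            ((m1 * (m1 - 1) + m2 * (m2 + 3) : ℤ) : ℝ),
            ((m1 * (m1 - 1) + m2 * (m2 - 1) : ℤ) : ℝ)]} := by
  simp only [gamma111_explicit_general (level_one.trans_ne four_ne_zero), mem_planeOrbit_one_iff,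
    ← exists_and_left, and_left_comm, pohozaev_one_and_planeCoords_eq_iff]
end
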